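/- Let X be a compact Kähler manifold and α ∈ H^{1,1}(X,ℝ) a big cohomology class with smooth representative θ. If there exists an exponentially continuous θ-plurisubharmonic function with minimal singularities, then P(α) = NB(α). -/

import Mathlib

open Topology Filter Set

/-- The exponential of an extended real number, with the convention
`e^{-∞} = 0` (the value at `+∞` is irrelevant here since quasi-psh functions
take values in `ℝ ∪ {-∞}`). -/
noncomputable def expE : EReal → ℝ := fun t => if t = ⊥ then 0 else Real.exp t.toReal

/-- Abstract setting for pluripotential theory on a compact Kähler manifold `X`
of complex dimension `n`, endowed with a fixed smooth closed real `(1,1)`-form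
`θ` representing a *big* cohomology class `α ∈ H^{1,1}(X,ℝ)`.

Since Mathlib does not yet have complex manifolds, Kähler forms, positive
currents, or the `dd^c` operator, the set `PSH(X,θ)` of `θ`-plurisubharmonic
functions (functions `φ : X → ℝ ∪ {-∞}` which are locally the sum of a smooth
and a plurisubharmonic function and satisfy `θ + dd^c φ ≥ 0` as currents) is
given abstractly, together with its standard basic properties.  Bigness of `α`
is recorded through the ample locus `Amp(α)` and Boucksom's Kähler current with
analytic singularities whose singular set is exactly `X \ Amp(α)`. -/
structure BigClassSetting (X : Type*) [TopologicalSpace X] [CompactSpace X] where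
  /-- the complex dimension of `X` -/
  n : ℕ
  npos : 0 < n
  /-- `PSH φ` means `φ ∈ PSH(X,θ)`. -/
  PSH : (X → EReal) → Prop
  psh_nonempty : ∃ φ, PSH φ
  psh_usc : ∀ φ, PSH φ → UpperSemicontinuous φ
  psh_ne_top : ∀ φ, PSH φ → ∀ x, φ x ≠ ⊤
  psh_max : ∀ φ ψ, PSH φ → PSH ψ → PSH fun x => max (φ x) (ψ x)
  psh_add_const : ∀ φ (c : ℝ), PSH φ → PSH fun x => φ x + (c : EReal)
  /-- the extremal function `V_θ = sup{v ∈ PSH(X,θ) : v ≤ 0}` is `θ`-psh. -/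
  psh_V : PSH fun x => ⨆ ψ ∈ {ψ : X → EReal | PSH ψ ∧ ∀ y, ψ y ≤ 0}, ψ x
  /-- the ample locus `Amp(α)` of the big class `α`: the Zariski open set of
  points at which some Kähler current in `α` with analytic singularities is
  smooth. -/
  ample : Set X
  ample_open : IsOpen ample
  ample_nonempty : ample.Nonempty
  /-- `α` is big: by Boucksom there is a Kähler current `T₀ = θ + dd^c ψ₀` in
  `α` with analytic singularities and `Amp(α) = X \ Sing T₀`; its potential
  `ψ₀` is `θ`-psh, nonpositive, exponentially continuous, and equal to `-∞`
  exactly outside the ample locus. -/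
  bigWitness : ∃ ψ₀, PSH ψ₀ ∧ (∀ x, ψ₀ x ≤ 0) ∧
    Continuous (fun x => expE (ψ₀ x)) ∧ ∀ x, ψ₀ x = ⊥ ↔ x ∉ ample

namespace BigClassSetting

variable {X : Type*} [TopologicalSpace X] [CompactSpace X]

/-- The extremal function `V_θ := sup{v ∈ PSH(X,θ) : sup_X v ≤ 0}`. -/
noncomputable def V (S : BigClassSetting X) : X → EReal :=
  fun x => ⨆ ψ ∈ {ψ : X → EReal | S.PSH ψ ∧ ∀ y, ψ y ≤ 0}, ψ x

/-- The polar locus `P(α) := {x ∈ X : V_θ(x) = -∞}`. -/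
def polar (S : BigClassSetting X) : Set X := {x | S.V x = ⊥}

/-- The non-bounded locus `NB(α) := {x ∈ X : V_θ ∉ L^∞_loc({x})}`. -/
def NB (S : BigClassSetting X) : Set X :=
  {x | ¬ ∃ U ∈ 𝓝 x, ∃ C : ℝ, ∀ y ∈ U, (-C : ℝ) ≤ S.V y}

/-- `φ` has minimal singularities: every `ψ ∈ PSH(X,θ)` satisfies `ψ ≤ φ + C`
for some constant `C`. -/
def MinSing (S : BigClassSetting X) (φ : X → EReal) : Prop :=
  ∀ ψ, S.PSH ψ → ∃ C : ℝ, ∀ x, ψ x ≤ φ x + (C : EReal)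

end BigClassSetting

theorem expE_pos {t : EReal} (ht : t ≠ ⊥) : 0 < expE t := by
  simpa only [expE, if_neg ht] using Real.exp_pos _

theorem coe_le_of_exp_le_expE {a : ℝ} {t : EReal} (ht : t ≠ ⊤) (h : Real.exp a ≤ expE t) :
    (a : EReal) ≤ t := by
  have hbot : t ≠ ⊥ := by
    rintro rfl
    simp only [expE, if_true] at h
    exact absurd h (Real.exp_pos a).not_ge
  simp only [expE, if_neg hbot, Real.exp_le_exp] at h
  rw [← EReal.coe_toReal ht hbot]
  exact_mod_cast h

theorem le_coe_of_expE_le_exp {M : ℝ} {t : EReal} (ht : t ≠ ⊤) (h : expE t ≤ Real.exp M) :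
    t ≤ (M : EReal) := by
  by_cases hbot : t = ⊥
  · simp [hbot]
  simp only [expE, if_neg hbot, Real.exp_le_exp] at h
  rw [← EReal.coe_toReal ht hbot]
  exact_mod_cast h

/-- A function with values in `[-∞, ∞)` and continuous exponential is bounded above on a compact
space. -/
theorem exists_le_coe_of_continuous_expE {X : Type*} [TopologicalSpace X] [CompactSpace X]
    {φ : X → EReal} (hφ : ∀ x, φ x ≠ ⊤) (hcont : Continuous fun x => expE (φ x)) :
    ∃ M : ℝ, ∀ x, φ x ≤ (M : EReal) := by
  obtain ⟨B, hB⟩ := (isCompact_range hcont).bddAbove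
  refine ⟨B, fun x => le_coe_of_expE_le_exp (hφ x) ?_⟩
  have hx : expE (φ x) ≤ B := hB (mem_range_self x)
  linarith [Real.add_one_le_exp B]

/-- A function with values in `[-∞, ∞)` and continuous exponential is locally bounded below at
every point where it is finite. -/
theorem exists_eventually_coe_le_of_continuous_expE {X : Type*} [TopologicalSpace X]
    {φ : X → EReal} (hφ : ∀ x, φ x ≠ ⊤) (hcont : Continuous fun x => expE (φ x)) {x : X}
    (hx : φ x ≠ ⊥) : ∃ a : ℝ, ∀ᶠ y in 𝓝 x, (a : EReal) ≤ φ y := by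
  have hpos := expE_pos hx
  refine ⟨Real.log (expE (φ x) / 2), ?_⟩
  filter_upwards [hcont.continuousAt.eventually (lt_mem_nhds (half_lt_self hpos))] with y hy
  refine coe_le_of_exp_le_expE (hφ y) ?_
  rw [Real.exp_log (half_pos hpos)]
  exact hy.le

namespace BigClassSetting

variable {X : Type*} [TopologicalSpace X] [CompactSpace X]

theorem le_V (S : BigClassSetting X) {ψ : X → EReal} (hψ : S.PSH ψ) (hψ0 : ∀ y, ψ y ≤ 0) (x : X) :
    ψ x ≤ S.V x :=
  le_iSup₂_of_le (f := fun (ψ : X → EReal) (_ : ψ ∈ {ψ | S.PSH ψ ∧ ∀ y, ψ y ≤ 0}) => ψ x)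
    ψ ⟨hψ, hψ0⟩ le_rfl

theorem polar_subset_NB (S : BigClassSetting X) : S.polar ⊆ S.NB := by
  rintro x hx ⟨U, hU, C, hC⟩
  have hbound := hC x (mem_of_mem_nhds hU)
  rw [show S.V x = ⊥ from hx, le_bot_iff] at hbound
  exact EReal.coe_ne_bot _ hbound

end BigClassSetting

/-- If the big class `α` contains an exponentially continuous
`θ`-plurisubharmonic function with minimal singularities, then the polar locus
`P(α)` coincides with the non-bounded locus `NB(α)`. -/
theorem polar_eq_NB_of_expCont_minSing
    {X : Type*} [TopologicalSpace X] [CompactSpace X] [Nonempty X]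
    (S : BigClassSetting X)
    (h : ∃ φ : X → EReal, S.PSH φ ∧ S.MinSing φ ∧ Continuous fun x => expE (φ x)) :
    S.polar = S.NB := by
  obtain ⟨φ, hφ, hmin, hcont⟩ := h
  refine S.polar_subset_NB.antisymm fun x hx => ?_
  by_contra hVx
  refine hx ?_
  have htop := S.psh_ne_top φ hφ
  obtain ⟨C, hC⟩ := hmin S.V S.psh_V
  have hφx : φ x ≠ ⊥ := fun hbot => hVx (le_bot_iff.1 (by simpa [hbot] using hC x))
  obtain ⟨M, hM⟩ := exists_le_coe_of_continuous_expE htop hcont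
  obtain ⟨a, ha⟩ := exists_eventually_coe_le_of_continuous_expE htop hcont hφx
  have hle : ∀ y, φ y + ((-M : ℝ) : EReal) ≤ S.V y :=
    S.le_V (S.psh_add_const φ (-M) hφ) fun y =>
      (add_le_add_left (hM y) _).trans (by rw [← EReal.coe_add]; simp)
  refine ⟨_, ha, M - a, fun y hy => le_trans ?_ (hle y)⟩
  calc ((-(M - a) : ℝ) : EReal) = (a : EReal) + ((-M : ℝ) : EReal) := by
        rw [← EReal.coe_add]; congr 1; ring
    _ ≤ φ y + ((-M : ℝ) : EReal) := add_le_add_left hy _
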